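/- Let X be a compact homogeneous Hausdorff space. Then |X| ≤ 2^{t(X)}, where t(X) is the tightness of X. In particular, every compact homogeneous space of countable tightness has cardinality at most 𝔠. -/

import Mathlib

open Set Cardinal TopologicalSpace

universe u

/-- The tightness of `X` is at most `κ`. -/
def TightnessLE (X : Type u) [TopologicalSpace X] (κ : Cardinal.{u}) : Prop :=
  ∀ (A : Set X) (x : X), x ∈ closure A → ∃ B ⊆ A, #B ≤ κ ∧ x ∈ closure B

/-- A well-order of type `κ⁺`: initial segments have size at most `κ`, and sets of size at most `κ`
are strictly bounded. -/
theorem exists_wellOrder_of_succ {κ : Cardinal.{u}} (hκ : ℵ₀ ≤ κ) :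
    ∃ (I : Type u) (_ : LinearOrder I) (_ : WellFoundedLT I), #I ≤ Order.succ κ ∧
      (∀ α : I, #(Iio α) ≤ κ) ∧ ∀ S : Set I, #S ≤ κ → ∃ α, ∀ β ∈ S, β < α := by
  refine ⟨(Order.succ κ).ord.ToType, inferInstance, inferInstance, by simp, fun α => ?_,
    fun S hS => ?_⟩
  · exact Order.lt_succ_iff.1 ((mk_Iio_lt α (by simp)).trans_eq (by simp))
  · have h : ¬ IsCofinal S := fun h => by
      have h1 := Order.cof_le h
      rw [Ordinal.cof_toType, (isRegular_succ hκ).cof_ord] at h1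
      exact (Order.lt_succ κ).not_ge (h1.trans hS)
    simpa [IsCofinal] using h

/-- Recursive construction of a transfinite sequence each of whose terms satisfies a relation to the
previous ones. -/
theorem exists_wellFounded_rec {I : Type*} [LinearOrder I] [WellFoundedLT I] {σ : Type*}
    [Nonempty σ] (R : I → (I → σ) → σ → Prop)
    (hcongr : ∀ α s s' t, (∀ β < α, s β = s' β) → R α s t → R α s' t)
    (hR : ∀ α s, (∀ β < α, R β s (s β)) → ∃ t, R α s t) :
    ∃ s : I → σ, ∀ α, R α s (s α) := by
  classical
  let d : σ := Classical.arbitrary σ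
  let F : (α : I) → ((β : I) → β < α → σ) → σ := fun α prev =>
    Classical.epsilon (R α (fun β => if h : β < α then prev β h else d))
  let s : I → σ := wellFounded_lt.fix F
  refine ⟨s, fun α => ?_⟩
  induction α using WellFoundedLT.induction with
  | ind α ih =>
    obtain ⟨t, ht⟩ := hR α s ih
    have hs : s α = Classical.epsilon (R α (fun β => if β < α then s β else d)) := by
      simp only [s]
      rw [WellFounded.fix_eq]
      simp only [F, dite_eq_ite]
    have h : ∃ t, R α (fun β => if β < α then s β else d) t :=
      ⟨t, hcongr α s _ t (fun β hβ => by simp [hβ]) ht⟩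
    have h2 := Classical.epsilon_spec h
    rw [← hs] at h2
    exact hcongr α _ s _ (fun β hβ => by simp [hβ]) h2

theorem mk_biUnion_le_of_le {ι Y : Type u} {c : Cardinal.{u}} (hc : ℵ₀ ≤ c) (S : Set ι)
    (A : ι → Set Y) (hS : #S ≤ c) (hA : ∀ i ∈ S, #(A i) ≤ c) : #(⋃ i ∈ S, A i) ≤ c :=
  (mk_biUnion_le A S).trans <| (mul_le_mul' hS (ciSup_le' fun i : S => hA i i.2)).trans
    (mul_eq_self hc).le

theorem mk_finset_le_of_le {Y : Type u} {c : Cardinal.{u}} (hc : ℵ₀ ≤ c) (h : #Y ≤ c) :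
    #(Finset Y) ≤ c := by
  cases finite_or_infinite Y
  · exact (mk_lt_aleph0_iff.2 inferInstance).le.trans hc
  · rwa [mk_finset_of_infinite]

/-- Closing off a set under an operation on subsets of size at most `κ`. -/
theorem exists_closed_under {X : Type u} {κ : Cardinal.{u}} (hκ : ℵ₀ ≤ κ) (Φ : Set X → Set X)
    (hΦ : ∀ A : Set X, #A ≤ κ → #(Φ A) ≤ 2 ^ κ) :
    ∃ H : Set X, #H ≤ 2 ^ κ ∧ ∀ A ⊆ H, #A ≤ κ → Φ A ⊆ H := by
  obtain ⟨I, _, _, hI, hIio, hcof⟩ := exists_wellOrder_of_succ hκ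
  have h2 : ℵ₀ ≤ 2 ^ κ := hκ.trans (cantor κ).le
  obtain ⟨s, hs⟩ := exists_wellFounded_rec (I := I) (σ := Set X)
    (fun α s t => t = ⋃ A ∈ {A : Set X | A ⊆ (⋃ β ∈ Iio α, s β) ∧ #A ≤ κ}, Φ A)
    (fun α s s' t h ht => by
      have : (⋃ β ∈ Iio α, s β) = ⋃ β ∈ Iio α, s' β := iUnion₂_congr h
      rw [ht, this])
    (fun α s _ => ⟨_, rfl⟩)
  have hcard : ∀ α, #(s α) ≤ 2 ^ κ := fun α => by
    induction α using WellFoundedLT.induction with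
    | ind α ih =>
      rw [hs α]
      refine mk_biUnion_le_of_le h2 _ _ ?_ fun A hA => hΦ A hA.2
      have h1 : #(⋃ β ∈ Iio α, s β : Set X) ≤ 2 ^ κ :=
        mk_biUnion_le_of_le h2 _ _ ((hIio α).trans (cantor κ).le) ih
      refine (mk_bounded_subset_le _ κ).trans ?_
      refine (power_le_power_right (max_le h1 h2)).trans ?_
      rw [← power_mul, mul_eq_self hκ]
  refine ⟨⋃ α ∈ Set.univ, s α, mk_biUnion_le_of_le h2 _ _ ?_ fun α _ => hcard α, fun A hA hAκ => ?_⟩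
  · rw [Cardinal.mk_univ]
    exact hI.trans (Order.succ_le_of_lt (cantor κ))
  · have h : ∀ a : A, ∃ α, (a : X) ∈ s α := fun a => by simpa using hA a.2
    choose f hf using h
    obtain ⟨α, hα⟩ := hcof (range f) (mk_range_le.trans hAκ)
    refine Subset.trans ?_ (subset_biUnion_of_mem (u := s) (Set.mem_univ α))
    rw [hs α]
    exact subset_biUnion_of_mem (u := Φ) (show A ∈ {A : Set X | _} from
      ⟨fun a ha => mem_biUnion (hα _ (mem_range_self ⟨a, ha⟩)) (hf ⟨a, ha⟩), hAκ⟩)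

/-- A compact space of tightness at most `κ` has no free sequence of length `κ⁺`. -/
theorem TightnessLE.exists_not_disjoint {X : Type u} [TopologicalSpace X] [CompactSpace X]
    {κ : Cardinal.{u}} (ht : TightnessLE X κ) {I : Type u} [LinearOrder I] [Nonempty I]
    (hcof : ∀ S : Set I, #S ≤ κ → ∃ α, ∀ β ∈ S, β < α) (x : I → X) :
    ∃ α, ¬ Disjoint (closure (x '' Iio α)) (closure (x '' Ici α)) := by
  obtain ⟨y, hy⟩ : (⋂ α, closure (x '' Ici α)).Nonempty := by
    refine IsCompact.nonempty_iInter_of_directed_nonempty_isCompact_isClosed _ ?_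
      (fun α => nonempty_Ici.image x |>.closure) (fun α => isClosed_closure.isCompact)
      (fun α => isClosed_closure)
    exact Antitone.directed_ge fun a b h => closure_mono (image_mono (Ici_subset_Ici.2 h))
  rw [mem_iInter] at hy
  obtain ⟨B, hB, hBκ, hyB⟩ := ht (range x) y
    (closure_mono (image_subset_range _ _) (hy (Classical.arbitrary I)))
  choose f hf using fun b : B => hB b.2
  obtain ⟨α, hα⟩ := hcof (range f) (mk_range_le.trans hBκ)
  refine ⟨α, Set.not_disjoint_iff.2 ⟨y, closure_mono (fun b hb => ?_) hyB, hy α⟩⟩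
  exact ⟨f ⟨b, hb⟩, hα _ (mem_range_self _), hf ⟨b, hb⟩⟩

theorem exists_isOpen_closure_subset {X : Type*} [TopologicalSpace X] [RegularSpace X] {x : X}
    {U : Set X} (hU : IsOpen U) (hx : x ∈ U) : ∃ V, IsOpen V ∧ x ∈ V ∧ closure V ⊆ U := by
  obtain ⟨K, hK, hKc, hKU⟩ := exists_mem_nhds_isClosed_subset (hU.mem_nhds hx)
  exact ⟨interior K, isOpen_interior, mem_interior_iff_mem_nhds.2 hK,
    (closure_minimal interior_subset hKc).trans hKU⟩

/-- In a compact Hausdorff space of tightness at most `κ`, some nonempty `G_κ`-set is contained in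
the closure of a set of size at most `κ`. -/
theorem TightnessLE.exists_iInter_subset_closure {X : Type u} [TopologicalSpace X] [CompactSpace X]
    [T2Space X] [Nonempty X] {κ : Cardinal.{u}} (hκ : ℵ₀ ≤ κ) (ht : TightnessLE X κ) :
    ∃ (p : X) (ι : Type u) (U : ι → Set X) (S : Set X), #ι ≤ κ ∧ #S ≤ κ ∧
      (∀ i, IsOpen (U i) ∧ p ∈ U i) ∧ ⋂ i, U i ⊆ closure S := by
  by_contra! H
  obtain ⟨I, _, _, -, hIio, hcof⟩ := exists_wellOrder_of_succ hκ
  have hIne : Nonempty I := ⟨(hcof ∅ (by simp)).choose⟩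
  obtain ⟨s, hs⟩ := exists_wellFounded_rec (I := I) (σ := X × C(X, ℝ))
    (fun α s t => (∀ β < α, (s β).2 t.1 = 0) ∧ t.2 t.1 = 0 ∧ ∀ β < α, t.2 (s β).1 = 1)
    (fun α s s' t h ht => ⟨fun β hβ => h β hβ ▸ ht.1 β hβ, ht.2.1,
      fun β hβ => h β hβ ▸ ht.2.2 β hβ⟩)
    (fun α s hs => by
      obtain ⟨p, hp⟩ : (⋂ β : Iio α, {x | (s β).2 x = 0}).Nonempty := by
        refine CompactSpace.iInter_nonempty
          (fun β => isClosed_eq (s β).2.continuous continuous_const) fun t => ?_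
        obtain rfl | hne := t.eq_empty_or_nonempty
        · simp
        · obtain ⟨m, hm, hmax⟩ := t.exists_max_image id hne
          refine ⟨(s m).1, mem_iInter₂.2 fun β hβ => ?_⟩
          obtain h | h := (hmax β hβ).lt_or_eq
          · exact (hs m m.2).1 β h
          · obtain rfl : β = m := h
            exact (hs β β.2).2.1
      rw [mem_iInter] at hp
      have hcard : #(Iio α × ℕ) ≤ κ := by
        rw [mk_prod, mk_nat, lift_aleph0, lift_uzero]
        exact (mul_le_mul' (hIio α) hκ).trans (mul_eq_self hκ).le
      have hnot := H p (Iio α × ℕ) (fun i => {x | |(s i.1).2 x| < 1 / ((i.2 : ℝ) + 1)})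
        ((fun β => (s β).1) '' Iio α) hcard (mk_image_le.trans (hIio α))
        (fun i => ⟨isOpen_lt (s i.1).2.continuous.abs continuous_const, by
          have : (s i.1).2 p = 0 := hp i.1
          simp only [mem_ofPred_eq, this, abs_zero]
          positivity⟩)
      obtain ⟨z, hz, hzS⟩ := not_subset.1 hnot
      obtain ⟨f, hf0, hf1, -⟩ := exists_continuous_zero_one_of_isClosed (isClosed_singleton (x := z))
        isClosed_closure (disjoint_singleton_left.2 hzS)
      refine ⟨(z, f), fun β hβ => ?_, hf0 rfl,
        fun β hβ => hf1 (subset_closure (mem_image_of_mem _ hβ))⟩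
      by_contra hne
      obtain ⟨n, hn⟩ := exists_nat_one_div_lt (abs_pos.2 hne)
      exact lt_asymm hn (mem_iInter.1 hz (⟨β, hβ⟩, n)))
  obtain ⟨α, hα⟩ := ht.exists_not_disjoint hcof fun β => (s β).1
  refine hα (Disjoint.mono (closure_minimal (t := {x | (s α).2 x = 1}) ?_ ?_)
    (closure_minimal (t := {x | (s α).2 x = 0}) ?_ ?_) ?_)
  · rintro _ ⟨β, hβ, rfl⟩
    exact (hs α).2.2 β hβ
  · exact isClosed_eq (s α).2.continuous continuous_const
  · rintro _ ⟨β, hβ, rfl⟩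
    obtain h | rfl := (mem_Ici.1 hβ).lt_or_eq
    · exact (hs β).1 α h
    · exact (hs α).2.1
  · exact isClosed_eq (s α).2.continuous continuous_const
  · refine Set.disjoint_left.2 fun x h1 h0 => ?_
    simp only [mem_ofPred_eq] at h0 h1
    exact one_ne_zero (h1.symm.trans h0)

/-- Shapirovskii: in a compact Hausdorff space of tightness at most `κ`, every point has a local
π-base of size at most `κ`. -/
theorem TightnessLE.exists_local_piBase {X : Type u} [TopologicalSpace X] [CompactSpace X]
    [T2Space X] {κ : Cardinal.{u}} (hκ : ℵ₀ ≤ κ) (ht : TightnessLE X κ) (p : X) :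
    ∃ (ι : Type u) (V : ι → Set X), #ι ≤ κ ∧ (∀ i, IsOpen (V i) ∧ (V i).Nonempty) ∧
      ∀ W, IsOpen W → p ∈ W → ∃ i, V i ⊆ W := by
  by_contra! H
  obtain ⟨I, _, _, -, hIio, hcof⟩ := exists_wellOrder_of_succ hκ
  have hIne : Nonempty I := ⟨(hcof ∅ (by simp)).choose⟩
  let N : (I → Opens X × Opens X) → Finset I → Finset I → Set X := fun s a b =>
    (⋂ β ∈ a, ((s β).1 : Set X)) ∩ ⋂ β ∈ b, (closure ((s β).2 : Set X))ᶜ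
  obtain ⟨s, hs⟩ := exists_wellFounded_rec (I := I) (σ := Opens X × Opens X)
    (fun α s t => p ∈ t.1 ∧ closure (t.1 : Set X) ⊆ t.2 ∧
      ∀ a b : Finset I, (∀ β ∈ a, β < α) → (∀ β ∈ b, β < α) → (N s a b).Nonempty →
        (N s a b ∩ (closure (t.2 : Set X))ᶜ).Nonempty)
    (fun α s s' t h ht => ⟨ht.1, ht.2.1, fun a b ha hb => by
      have : N s' a b = N s a b := by
        simp only [N]
        congr 1
        · exact iInter₂_congr fun β hβ => by rw [h β (ha β hβ)]
        · exact iInter₂_congr fun β hβ => by rw [h β (hb β hβ)]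
      rw [this]
      exact ht.2.2 a b ha hb⟩)
    (fun α s _ => by
      let emb : Finset (Iio α) → Finset I := fun a => a.map (Function.Embedding.subtype _)
      let J := {i : Finset (Iio α) × Finset (Iio α) // (N s (emb i.1) (emb i.2)).Nonempty}
      have hJ : #J ≤ κ := by
        refine (mk_subtype_le _).trans ?_
        rw [mk_prod, lift_id]
        exact (mul_le_mul' (mk_finset_le_of_le hκ (hIio α)) (mk_finset_le_of_le hκ (hIio α))).trans
          (mul_eq_self hκ).le
      obtain ⟨W, hW, hpW, hnot⟩ := H J (fun i => N s (emb i.1.1) (emb i.1.2)) hJ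
        (fun i => ⟨(isOpen_biInter_finset fun β _ => (s β).1.2).inter
          (isOpen_biInter_finset fun β _ => isClosed_closure.isOpen_compl), i.2⟩)
      obtain ⟨U, hU, hpU, hUW⟩ := exists_isOpen_closure_subset hW hpW
      obtain ⟨V, hV, hpV, hVU⟩ := exists_isOpen_closure_subset hU hpU
      refine ⟨(⟨V, hV⟩, ⟨U, hU⟩), hpV, hVU, fun a b ha hb hne => ?_⟩
      have hemb : ∀ a : Finset I, (∀ β ∈ a, β < α) → ∃ a', emb a' = a := fun a ha =>
        ⟨a.subtype (· ∈ Iio α), Finset.subtype_map_of_mem ha⟩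
      obtain ⟨a, rfl⟩ := hemb a ha
      obtain ⟨b, rfl⟩ := hemb b hb
      obtain ⟨z, hz, hzW⟩ := not_subset.1 (hnot ⟨(a, b), hne⟩)
      exact ⟨z, hz, fun h => hzW (hUW h)⟩)
  have hN : ∀ b a : Finset I, (∀ β ∈ a, ∀ γ ∈ b, β < γ) → (N s a b).Nonempty := by
    intro b
    induction b using Finset.induction_on_max with
    | empty => exact fun a _ => ⟨p, by simpa [N] using fun β _ => (hs β).1⟩
    | insert γ b hb ih =>
      intro a ha
      have h1 := (hs γ).2.2 a b (fun β hβ => ha β hβ γ (Finset.mem_insert_self _ _)) hb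
        (ih a fun β hβ δ hδ => ha β hβ δ (Finset.mem_insert_of_mem hδ))
      refine h1.mono fun z hz => ?_
      simp only [N, mem_inter_iff, mem_iInter] at hz ⊢
      refine ⟨hz.1.1, fun β hβ => ?_⟩
      obtain rfl | h := Finset.mem_insert.1 hβ
      · exact hz.2
      · exact hz.1.2 β h
  have hx : ∀ α, ∃ x, (∀ β ≤ α, x ∈ closure ((s β).1 : Set X)) ∧
      ∀ β, α < β → x ∉ ((s β).2 : Set X) := fun α => by
    obtain ⟨x, hx⟩ : (⋂ β, {x | (β ≤ α → x ∈ closure ((s β).1 : Set X)) ∧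
        (α < β → x ∉ ((s β).2 : Set X))}).Nonempty := by
      refine CompactSpace.iInter_nonempty (fun β => ?_) fun t => ?_
      · obtain h | h := le_or_gt β α
        · simp [h, h.not_gt]
        · have : {x | (β ≤ α → x ∈ closure ((s β).1 : Set X)) ∧ (α < β → x ∉ ((s β).2 : Set X))} =
            ((s β).2 : Set X)ᶜ := by
            ext
            simp [h, h.not_ge]
          exact this ▸ (s β).2.2.isClosed_compl
      · obtain ⟨z, hz⟩ := hN (t.filter (α < ·)) (t.filter (· ≤ α)) fun β hβ γ hγ =>
          (Finset.mem_filter.1 hβ).2.trans_lt (Finset.mem_filter.1 hγ).2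
        simp only [N, mem_inter_iff, mem_iInter, Finset.mem_filter] at hz
        exact ⟨z, mem_iInter₂.2 fun β hβ => ⟨fun h => subset_closure (hz.1 β ⟨hβ, h⟩),
          fun h h' => hz.2 β ⟨hβ, h⟩ (subset_closure h')⟩⟩
    rw [mem_iInter] at hx
    exact ⟨x, fun β => (hx β).1, fun β => (hx β).2⟩
  choose x hxV hxU using hx
  obtain ⟨α, hα⟩ := ht.exists_not_disjoint hcof x
  refine hα (Disjoint.mono (closure_minimal (t := ((s α).2 : Set X)ᶜ) ?_ (s α).2.2.isClosed_compl)
    (closure_minimal (t := closure ((s α).1 : Set X)) ?_ isClosed_closure)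
    (disjoint_compl_left.mono_right (hs α).2.1))
  · rintro _ ⟨β, hβ, rfl⟩
    exact hxU β α hβ
  · rintro _ ⟨β, hβ, rfl⟩
    exact hxV β α hβ

/-- If every point `x` lies in `⋂ i, U x i` with `U x i` open, then the closure of a set of size at
most `κ` is covered by at most `2 ^ κ` of these intersections. -/
theorem exists_cover_closure {X : Type u} [TopologicalSpace X] [RegularSpace X] {κ : Cardinal.{u}}
    (hκ : ℵ₀ ≤ κ) {ι : Type u} (hι : #ι ≤ κ) (U : X → ι → Set X)
    (hU : ∀ x i, IsOpen (U x i) ∧ x ∈ U x i) (A : Set X) (hA : #A ≤ κ) :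
    ∃ Y : Set X, #Y ≤ 2 ^ κ ∧ closure A ⊆ ⋃ y ∈ Y, ⋂ i, U y i := by
  have h : ∀ x i, ∃ C : Set A, x ∉ closure ((↑) '' C : Set X) ∧
      closure A \ closure ((↑) '' C : Set X) ⊆ U x i := fun x i => by
    obtain ⟨W, hW, hxW, hWU⟩ := exists_isOpen_closure_subset (hU x i).1 (hU x i).2
    refine ⟨{a | (a : X) ∉ W}, fun hx => ?_, fun z hz => hWU ?_⟩
    · obtain ⟨_, hzW, a, ha, rfl⟩ := mem_closure_iff.1 hx W hW hxW
      exact ha hzW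
    · have : A ⊆ W ∪ (↑) '' {a : A | (a : X) ∉ W} := fun a ha => by
        by_cases h : a ∈ W
        · exact Or.inl h
        · exact Or.inr ⟨⟨a, ha⟩, h, rfl⟩
      have h2 := closure_mono this hz.1
      rw [closure_union] at h2
      exact h2.resolve_right hz.2
  choose T hT hTU using h
  choose r hr using fun t : range T => t.2
  refine ⟨range r, mk_range_le.trans ((mk_set_le _).trans ?_), fun x hx => ?_⟩
  · rw [← power_def, mk_set]
    refine (power_le_power_right (power_le_power_left two_ne_zero hA)).trans ?_
    rw [← power_mul]
    exact power_le_power_left two_ne_zero ((mul_le_mul' le_rfl hι).trans (mul_eq_self hκ).le)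
  · refine mem_biUnion (mem_range_self ⟨T x, mem_range_self x⟩) (mem_iInter.2 fun i => ?_)
    refine hTU _ i ⟨hx, ?_⟩
    rw [hr]
    exact hT x i

/-- Pytkeev: in a compact Hausdorff space of tightness at most `κ`, a cover by `G_κ`-sets has a
subcover of size at most `2 ^ κ`. -/
theorem TightnessLE.exists_subcover {X : Type u} [TopologicalSpace X] [CompactSpace X]
    [T2Space X] {κ : Cardinal.{u}} (hκ : ℵ₀ ≤ κ) (ht : TightnessLE X κ) {ι : Type u} (hι : #ι ≤ κ)
    (U : X → ι → Set X) (hU : ∀ x i, IsOpen (U x i) ∧ x ∈ U x i) :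
    ∃ H : Set X, #H ≤ 2 ^ κ ∧ ⋃ y ∈ H, ⋂ i, U y i = Set.univ := by
  classical
  choose! Y hY hAY using exists_cover_closure hκ hι U hU
  let P (A : Set X) : Set X := ⋃ F ∈ {F : Finset (A × ι) | (⋃ j ∈ F, U j.1 j.2) ≠ Set.univ},
    {x | ∃ h : ∃ q, q ∉ ⋃ j ∈ F, U j.1 j.2, x = h.choose}
  obtain ⟨H, hH, hcl⟩ := exists_closed_under hκ (fun A => Y A ∪ P A) fun A hA => by
    refine (mk_union_le _ _).trans (add_le_of_le (hκ.trans (cantor κ).le) (hY A hA) ?_)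
    refine le_trans (mk_biUnion_le_of_le hκ _ _ ((mk_set_le _).trans (mk_finset_le_of_le hκ ?_))
      fun F _ => (mk_le_one_iff_set_subsingleton.2 ?_).trans (one_le_aleph0.trans hκ)) (cantor κ).le
    · rw [mk_prod, lift_id, lift_id]
      exact (mul_le_mul' hA hι).trans (mul_eq_self hκ).le
    · rintro x ⟨h, rfl⟩ y ⟨h', rfl⟩
      rfl
  refine ⟨H, hH, eq_univ_of_forall fun q => ?_⟩
  by_contra hq
  have hq' : ∀ y : H, ∃ i, q ∉ U y i := fun y => by
    simp only [mem_iUnion, mem_iInter, not_exists, not_forall] at hq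
    exact hq y y.2
  choose f hf using hq'
  obtain ⟨t, hcover⟩ := isClosed_closure.isCompact.elim_finite_subcover (s := closure H)
    (fun y : H => U y (f y)) (fun y => (hU _ _).1) fun z hz => by
      obtain ⟨A, hAH, hAκ, hzA⟩ := ht H z hz
      obtain ⟨y, hy, hzy⟩ := mem_iUnion₂.1 (hAY A hAκ hzA)
      exact mem_iUnion.2 ⟨⟨y, hcl A hAH hAκ (Or.inl hy)⟩, mem_iInter.1 hzy _⟩
  let A : Set X := (↑) '' (t : Set H)
  have hA : A ⊆ H := by rintro _ ⟨y, -, rfl⟩; exact y.2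
  let F : Finset (A × ι) := t.attach.image fun y => (⟨y.1, y.1, y.2, rfl⟩, f y.1)
  have hF : ⋃ j ∈ F, U j.1 j.2 = ⋃ y ∈ t, U y (f y) := by
    ext z
    simp only [F, mem_iUnion, Finset.mem_image, exists_prop]
    constructor
    · rintro ⟨_, ⟨y, -, rfl⟩, hz⟩
      exact ⟨y, y.2, hz⟩
    · rintro ⟨y, hy, hz⟩
      exact ⟨_, ⟨⟨y, hy⟩, Finset.mem_attach _ _, rfl⟩, hz⟩
  have hqF : ∃ q, q ∉ ⋃ j ∈ F, U j.1 j.2 := ⟨q, by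
    rw [hF]
    simpa using fun y hy _ => hf ⟨y, hy⟩⟩
  have hAκ : #A ≤ κ := (((t.finite_toSet.image _).lt_aleph0).le).trans hκ
  have hmem : hqF.choose ∈ H := hcl A hA hAκ <| Or.inr <| mem_biUnion
    (show F ∈ {F : Finset (A × ι) | (⋃ j ∈ F, U j.1 j.2) ≠ Set.univ} from
      fun h => hqF.choose_spec (h.symm.subset (Set.mem_univ _))) ⟨hqF, rfl⟩
  exact hqF.choose_spec (hF.symm.subset (hcover (subset_closure hmem)))

/-- Van Mill: a homogeneous Hausdorff space with a dense set `D` and a local π-base indexed by `ι`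
at some point has size at most `#D ^ #ι`. -/
theorem mk_le_power_of_homogeneous {X : Type u} [TopologicalSpace X] [T2Space X] {p : X}
    (hhom : ∀ x : X, ∃ e : X ≃ₜ X, e p = x) {D : Set X} (hD : Dense D) {ι : Type u}
    (V : ι → Set X) (hV : ∀ i, IsOpen (V i) ∧ (V i).Nonempty)
    (hp : ∀ W, IsOpen W → p ∈ W → ∃ i, V i ⊆ W) : #X ≤ #D ^ #ι := by
  choose e he using hhom
  have h : ∀ x i, ∃ d : D, (d : X) ∈ e x '' V i := fun x i => by
    obtain ⟨d, hd, hdD⟩ := hD.inter_open_nonempty _ ((e x).isOpenMap _ (hV i).1)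
      ((hV i).2.image _)
    exact ⟨⟨d, hdD⟩, hd⟩
  choose d hd using h
  rw [power_def]
  refine mk_le_of_injective (f := d) fun x y hxy => ?_
  by_contra hne
  obtain ⟨A, B, hA, hB, hxA, hyB, hAB⟩ := t2_separation hne
  obtain ⟨i, hi⟩ := hp (e x ⁻¹' A ∩ e y ⁻¹' B)
    ((hA.preimage (e x).continuous).inter (hB.preimage (e y).continuous))
    ⟨by simpa [he] using hxA, by simpa [he] using hyB⟩
  obtain ⟨v, hv, hvd⟩ := hd x i
  obtain ⟨w, hw, hwd⟩ := hd y i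
  have hdA : (d x i : X) ∈ A := hvd ▸ (hi hv).1
  have hdB : (d y i : X) ∈ B := hwd ▸ (hi hw).2
  exact Set.disjoint_left.1 hAB hdA (hxy ▸ hdB)

/-- (De la Vega) Let `X` be a compact homogeneous Hausdorff space. Then `|X| ≤ 2^{t(X)}`:
for every infinite cardinal `κ` bounding the tightness of `X`, `|X| ≤ 2^κ`. In particular,
a compact homogeneous space of countable tightness has cardinality at most `𝔠`. -/
theorem de_la_vega
    (X : Type u) [TopologicalSpace X] [CompactSpace X] [T2Space X]
    (hhom : ∀ x y : X, ∃ e : X ≃ₜ X, e x = y)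
    (κ : Cardinal.{u}) (hκ : ℵ₀ ≤ κ)
    (ht : ∀ (A : Set X) (x : X), x ∈ closure A → ∃ B ⊆ A, #B ≤ κ ∧ x ∈ closure B) :
    #X ≤ 2 ^ κ := by
  obtain _ | _ := isEmpty_or_nonempty X
  · simp
  have ht' : TightnessLE X κ := ht
  have h2 : ℵ₀ ≤ 2 ^ κ := hκ.trans (cantor κ).le
  obtain ⟨p, ι, U, S, hι, hS, hU, hUS⟩ := ht'.exists_iInter_subset_closure hκ
  choose e he using hhom p
  obtain ⟨H, hH, hcover⟩ := ht'.exists_subcover hκ hι (fun x i => e x '' U i) fun x i =>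
    ⟨(e x).isOpenMap _ (hU i).1, p, (hU i).2, he x⟩
  have hdense : Dense (⋃ y ∈ H, e y '' S) := fun x => by
    have hx : x ∈ ⋃ y ∈ H, ⋂ i, e y '' U i := hcover ▸ Set.mem_univ x
    obtain ⟨y, hy, hxy⟩ := mem_iUnion₂.1 hx
    refine closure_mono (subset_biUnion_of_mem (u := fun y => e y '' S) hy) ?_
    rw [← (e y).image_closure]
    refine ⟨(e y).symm x, hUS (mem_iInter.2 fun i => ?_), (e y).apply_symm_apply x⟩
    obtain ⟨u, hu, rfl⟩ := mem_iInter.1 hxy i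
    simpa using hu
  have hD : #(⋃ y ∈ H, e y '' S : Set X) ≤ 2 ^ κ :=
    mk_biUnion_le_of_le h2 _ _ hH fun y _ => mk_image_le.trans (hS.trans (cantor κ).le)
  obtain ⟨J, V, hJ, hV, hpV⟩ := ht'.exists_local_piBase hκ p
  calc #X ≤ #(⋃ y ∈ H, e y '' S : Set X) ^ #J := mk_le_power_of_homogeneous (hhom p) hdense V hV hpV
    _ ≤ (2 ^ κ) ^ κ := (power_le_power_right hD).trans
        (power_le_power_left (aleph0_pos.trans_le h2).ne' hJ)
    _ = 2 ^ κ := by rw [← power_mul, mul_eq_self hκ]
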